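/- arXiv:2512.17693 — 2 statements merged into one kernel-verified Lean document; each statement's English description precedes it below -/
import Mathlib

section
/- Let G = (V,E) be a finite simple graph with a dominating clique K of order |K| ≥ 4. If, for every vertex v ∈ V \ K, d(v) ≤ min_{u ∈ K} d(u), then G is antimagic. -/
open Finset

/-- A finite simple graph is *antimagic* if there is a bijective labelling of its edges
by `{1, 2, …, m}` (where `m` is the number of edges) such that the vertex sums
`σ(u) = ∑_{v : uv ∈ E} f(uv)` are pairwise distinct. -/
def IsAntimagic {V : Type*} [Fintype V] [DecidableEq V] (G : SimpleGraph V)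
    [DecidableRel G.Adj] : Prop :=
  ∃ f : Sym2 V → ℕ,
    Set.BijOn f ↑G.edgeFinset ↑(Finset.Icc 1 G.edgeFinset.card) ∧
    Function.Injective fun u : V => ∑ v ∈ G.neighborFinset u, f s(u, v)

/-!
Label the edges in four consecutive blocks: first those with no endpoint in `K`, then those with
exactly one endpoint in `K` except for one reserved edge `s(v, φ v)` per vertex `v ∉ K`, then the
reserved edges, and finally the edges inside `K`.

The reserved edges receive their labels in the order of the partial sums at the vertices outside
`K`, which makes the sums outside `K` distinct. When the edges inside `K` are reached, each `u ∈ K`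
already has a partial sum; ranking `K` by these and labelling `s(u, u')` in the order of
`rank u + rank u'` makes the sums on `K` increase with the rank. Finally, since labels increase with
the number of endpoints in `K`, the degree condition makes every sum outside `K` smaller than every
sum on `K`.
-/

section Monovary

variable {ι α β : Type*} {f : ι → α} {g : ι → β}

theorem lt_of_monovaryOn_of_injOn [PartialOrder α] [Preorder β] {s : Set ι}
    (hfg : MonovaryOn f g s) (hf : Set.InjOn f s) {i j : ι} (hi : i ∈ s) (hj : j ∈ s)
    (hij : g i < g j) : f i < f j :=
  (hfg hi hj hij).lt_of_ne fun h => hij.ne (congrArg g (hf hi hj h))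

theorem monovaryOn_union_of_eqOn [Preorder α] [Preorder β] {f' : ι → α} {s t : Set ι} {c : β}
    (hfg : MonovaryOn f g s) (hf' : Set.EqOn f' f s) (hle : ∀ i ∈ s, ∀ j ∈ t, f' i ≤ f' j)
    (hs : ∀ i ∈ s, g i ≤ c) (ht : ∀ j ∈ t, g j = c) : MonovaryOn f' g (s ∪ t) := by
  rintro i (hi | hi) j (hj | hj) hij
  · simpa only [hf' hi, hf' hj] using hfg hi hj hij
  · exact hle i hi j hj
  · exact absurd (hij.trans_le (hs j hj)) (ht i hi).not_lt
  · exact absurd hij ((ht i hi).trans (ht j hj).symm).not_lt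

theorem injOn_add_of_monovaryOn {M : Type*} [AddCommMonoid M] [LinearOrder M]
    [IsOrderedCancelAddMonoid M] {f g : ι → M} {s : Set ι}
    (hfg : MonovaryOn f g s) (hf : Set.InjOn f s) : Set.InjOn (fun i => f i + g i) s := by
  intro i hi j hj h
  rcases lt_trichotomy (g i) (g j) with hij | hij | hij
  · exact absurd h (add_lt_add_of_le_of_lt (hfg hi hj hij) hij).ne
  · simp only [hij, add_left_inj] at h
    exact hf hi hj h
  · exact absurd h (add_lt_add_of_le_of_lt (hfg hj hi hij) hij).ne'

end Monovary

theorem sum_lt_sum_of_card_le_of_forall_lt {ι κ : Type*} {s : Finset ι} {t : Finset κ}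
    {f : ι → ℕ} {g : κ → ℕ} (hcard : #s ≤ #t) (ht : t.Nonempty)
    (hg : ∀ j ∈ t, 0 < g j) (hfg : ∀ i ∈ s, ∀ j ∈ t, f i < g j) :
    ∑ i ∈ s, f i < ∑ j ∈ t, g j := by
  have hsup : ∀ j ∈ t, s.sup f < g j := fun j hj =>
    (Finset.sup_lt_iff (hg j hj)).2 fun i hi => hfg i hi j hj
  calc ∑ i ∈ s, f i ≤ #s • s.sup f := sum_le_card_nsmul _ _ _ fun i hi => le_sup hi
    _ ≤ #t • s.sup f := by gcongr
    _ = ∑ _j ∈ t, s.sup f := (sum_const _).symm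
    _ < ∑ j ∈ t, g j := sum_lt_sum_of_nonempty ht hsup

theorem sum_lt_sum_of_forall_lt_of_sdiff {ι : Type*} [DecidableEq ι] {s t r : Finset ι}
    {f g : ι → ℕ} (hrs : r ⊆ s) (hrt : r ⊆ t) (hcard : #s ≤ #t) (ht : t.Nonempty)
    (hg : ∀ j ∈ t, 0 < g j) (hr : ∀ i ∈ r, f i < g i)
    (hsdiff : ∀ i ∈ s \ r, ∀ j ∈ t \ r, f i < g j) :
    ∑ i ∈ s, f i < ∑ j ∈ t, g j := by
  have hcard_sdiff : #(s \ r) ≤ #(t \ r) := by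
    rw [card_sdiff_of_subset hrs, card_sdiff_of_subset hrt]
    omega
  rw [← sum_sdiff hrs, ← sum_sdiff hrt]
  rcases (t \ r).eq_empty_or_nonempty with hempty | hnonempty
  · have hsr : s \ r = ∅ := by simpa [hempty] using hcard_sdiff
    have hr_nonempty : r.Nonempty := ht.mono (sdiff_eq_empty_iff_subset.1 hempty)
    simpa only [hempty, hsr, sum_empty, zero_add] using sum_lt_sum_of_nonempty hr_nonempty hr
  · exact add_lt_add_of_lt_of_le
      (sum_lt_sum_of_card_le_of_forall_lt hcard_sdiff hnonempty
        (fun j hj => hg j (mem_sdiff.1 hj).1) hsdiff)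
      (sum_le_sum fun i hi => (hr i hi).le)

theorem sum_erase_lt_sum_erase {V M : Type*} [DecidableEq V] [AddCommMonoid M] [PartialOrder M]
    [IsOrderedCancelAddMonoid M] {f : Sym2 V → M} {K : Finset V} (hcard : 3 ≤ #K) {u u' : V}
    (hu : u ∈ K) (hu' : u' ∈ K) (hne : u ≠ u')
    (hf : ∀ y ∈ (K.erase u).erase u', f s(u, y) < f s(u', y)) :
    ∑ y ∈ K.erase u, f s(u, y) < ∑ y ∈ K.erase u', f s(u', y) := by
  have hmem : u' ∈ K.erase u := mem_erase.2 ⟨hne.symm, hu'⟩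
  have hmem' : u ∈ K.erase u' := mem_erase.2 ⟨hne, hu⟩
  have hnonempty : ((K.erase u).erase u').Nonempty := by
    rw [← card_pos, card_erase_of_mem hmem, card_erase_of_mem hu]
    omega
  rw [← add_sum_erase _ _ hmem, ← add_sum_erase _ _ hmem', Sym2.eq_swap (a := u'),
    erase_right_comm (a := u')]
  exact add_lt_add_right (sum_lt_sum_of_nonempty hnonempty hf) _

section Labelling

variable {α β : Type*}

/-- A labelling of the finite set `A` by the consecutive numbers `1, …, #A`. The values of `f`
outside `A` are irrelevant. -/
def IsLabelling (f : α → ℕ) (A : Finset α) : Prop :=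
  Set.BijOn f ↑A ↑(Icc 1 #A)

namespace IsLabelling

variable {f : α → ℕ} {A B : Finset α}

theorem pos (hf : IsLabelling f A) {x : α} (hx : x ∈ A) : 0 < f x :=
  (mem_Icc.1 (hf.mapsTo hx)).1

theorem le_card (hf : IsLabelling f A) {x : α} (hx : x ∈ A) : f x ≤ #A :=
  (mem_Icc.1 (hf.mapsTo hx)).2

variable [DecidableEq α]

theorem update_insert (hf : IsLabelling f A) {a : α} (ha : a ∉ A) :
    IsLabelling (Function.update f a (#A + 1)) (insert a A) := by
  have hbij : Set.BijOn (Function.update f a (#A + 1)) ↑A ↑(Icc 1 #A) :=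
    Set.BijOn.congr hf fun x hx =>
      (Function.update_of_ne (ne_of_mem_of_not_mem (mem_coe.1 hx) ha) _ _).symm
  have hIcc : Icc 1 (#A + 1) = insert (#A + 1) (Icc 1 #A) :=
    (insert_Icc_right_eq_Icc_add_one (by omega)).symm
  rw [IsLabelling, card_insert_of_notMem ha, hIcc, coe_insert, coe_insert]
  simpa using hbij.insert (a := a) (by simp)

theorem exists_extension [LinearOrder β] (hf : IsLabelling f A) (hAB : Disjoint A B)
    (w : α → β) :
    ∃ g : α → ℕ, Set.EqOn g f A ∧ IsLabelling g (A ∪ B) ∧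
      (∀ x ∈ A, ∀ y ∈ B, g x < g y) ∧ MonovaryOn g w B := by
  induction B using Finset.induction_on_max_value w with
  | empty => exact ⟨f, fun _ _ => rfl, by simpa using hf, by simp, by simp [MonovaryOn.empty]⟩
  | insert a s has hmax ih =>
    rw [disjoint_insert_right] at hAB
    obtain ⟨g, hgf, hg, hlt, hmono⟩ := ih hAB.2
    have ha : a ∉ A ∪ s := by simp [has, hAB.1]
    have hold : Set.EqOn (Function.update g a (#(A ∪ s) + 1)) g ↑(A ∪ s) := fun x hx =>
      Function.update_of_ne (ne_of_mem_of_not_mem (mem_coe.1 hx) ha) _ _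
    have hlast : ∀ x ∈ A ∪ s, g x < Function.update g a (#(A ∪ s) + 1) a := fun x hx => by
      simpa using Nat.lt_succ_of_le (hg.le_card hx)
    have holdA : ∀ x ∈ A, Function.update g a (#(A ∪ s) + 1) x = g x := fun x hx =>
      hold (mem_coe.2 (mem_union_left s hx))
    have holds : ∀ x ∈ s, Function.update g a (#(A ∪ s) + 1) x = g x := fun x hx =>
      hold (mem_coe.2 (mem_union_right A hx))
    refine ⟨_, fun x hx => (holdA x hx).trans (hgf hx), ?_, ?_, ?_⟩
    · simpa only [union_insert] using hg.update_insert ha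
    · intro x hx y hy
      rw [holdA x hx]
      rcases mem_insert.1 hy with rfl | hy
      · exact hlast x (mem_union_left s hx)
      · simpa only [holds y hy] using hlt x hx y hy
    · rw [coe_insert, Set.insert_eq, Set.union_comm]
      refine monovaryOn_union_of_eqOn hmono holds ?_ hmax (by simp)
      rintro x hx _ rfl
      exact (holds x hx).trans_le (hlast x (mem_union_right A hx)).le

end IsLabelling

theorem exists_isLabelling_monovaryOn [LinearOrder β] (A : Finset α) (w : α → β) :
    ∃ f : α → ℕ, IsLabelling f A ∧ MonovaryOn f w A := by
  classical
  have hempty : IsLabelling (fun _ : α => 0) ∅ := by simp [IsLabelling]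
  obtain ⟨f, -, hf, -, hmono⟩ := hempty.exists_extension (disjoint_empty_left A) w
  exact ⟨f, by simpa using hf, hmono⟩

end Labelling

section EndpointSum

variable {V M : Type*} [AddCommMagma M]

/-- The edge weight induced by a vertex weight `q`: the sum of `q` over the two endpoints. It is
used to prescribe the order in which edges are labelled. -/
def endpointSum (q : V → M) (e : Sym2 V) : M :=
  (e.map q).add

theorem endpointSum_mk (q : V → M) (x y : V) : endpointSum q s(x, y) = q x + q y :=
  rfl

variable [DecidableEq V]

/-- The number of endpoints of an edge that lie in `K`. -/
def endpointCount (K : Finset V) : Sym2 V → ℕ :=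
  endpointSum fun x => if x ∈ K then 1 else 0

theorem endpointCount_mk (K : Finset V) (x y : V) :
    endpointCount K s(x, y) = (if x ∈ K then 1 else 0) + if y ∈ K then 1 else 0 :=
  rfl

theorem endpointCount_of_mem_sym2 {K : Finset V} {e : Sym2 V} (he : e ∈ K.sym2) :
    endpointCount K e = 2 := by
  induction e with | _ x y =>
  rw [mk_mem_sym2_iff] at he
  simp [endpointCount_mk, he.1, he.2]

theorem endpointCount_le_one_of_notMem_sym2 {K : Finset V} {e : Sym2 V} (he : e ∉ K.sym2) :
    endpointCount K e ≤ 1 := by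
  induction e with | _ x y =>
  rw [mk_mem_sym2_iff, not_and_or] at he
  rcases he with hx | hy <;> simp [endpointCount_mk, *] <;> split_ifs <;> simp

end EndpointSum

section VertexSum

variable {V : Type*} [Fintype V] (G : SimpleGraph V) [DecidableRel G.Adj] (f : Sym2 V → ℕ)

/-- The sum `σ(u)` of the labels of the edges at `u`. -/
def vertexSum (u : V) : ℕ :=
  ∑ v ∈ G.neighborFinset u, f s(u, v)

variable [DecidableEq V]

variable {G f} in
theorem vertexSum_eq_add_sum_erase {u v : V} (h : G.Adj u v) :
    vertexSum G f u = f s(u, v) + ∑ y ∈ (G.neighborFinset u).erase v, f s(u, y) :=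
  (add_sum_erase _ (fun y => f s(u, y)) ((G.mem_neighborFinset u v).2 h)).symm

theorem vertexSum_lt_vertexSum_iff (u v : V) :
    vertexSum G f u < vertexSum G f v ↔
      ∑ y ∈ (G.neighborFinset u).erase v, f s(u, y) <
        ∑ y ∈ (G.neighborFinset v).erase u, f s(v, y) := by
  by_cases h : G.Adj u v
  · rw [vertexSum_eq_add_sum_erase h, vertexSum_eq_add_sum_erase h.symm, Sym2.eq_swap (a := v),
      Nat.add_lt_add_iff_left]
  · rw [erase_eq_of_notMem (by simpa using h), erase_eq_of_notMem (by simpa [G.adj_comm] using h),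
      vertexSum, vertexSum]

theorem card_neighborFinset_erase_le_iff (u v : V) :
    #((G.neighborFinset u).erase v) ≤ #((G.neighborFinset v).erase u) ↔
      G.degree u ≤ G.degree v := by
  simpa [vertexSum] using not_congr (vertexSum_lt_vertexSum_iff G (fun _ => 1) v u).symm

variable {G f} {K : Finset V}

theorem vertexSum_congr_of_notMem {g : Sym2 V → ℕ}
    (hfg : Set.EqOn f g ↑(G.edgeFinset \ K.sym2)) {v : V} (hv : v ∉ K) :
    vertexSum G f v = vertexSum G g v :=
  sum_congr rfl fun y hy => hfg (by simpa [hv] using hy)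

theorem vertexSum_eq_sum_erase_add_sum_sdiff (hclique : G.IsClique K) {u : V} (hu : u ∈ K) :
    vertexSum G f u =
      ∑ y ∈ K.erase u, f s(u, y) + ∑ y ∈ G.neighborFinset u \ K, f s(u, y) := by
  have hinter : G.neighborFinset u ∩ K = K.erase u := by
    ext y
    simp only [mem_inter, SimpleGraph.mem_neighborFinset, mem_erase]
    exact ⟨fun h => ⟨h.1.ne', h.2⟩, fun h => ⟨hclique hu h.2 h.1.symm, h.2⟩⟩
  rw [← hinter, sum_inter_add_sum_sdiff, vertexSum]

theorem erase_subset_neighborFinset_erase (hclique : G.IsClique K) {u v : V} (hu : u ∈ K)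
    (hv : v ∉ K) : K.erase u ⊆ (G.neighborFinset u).erase v := by
  intro y hy
  rw [mem_erase] at hy
  exact mem_erase.2 ⟨ne_of_mem_of_not_mem hy.2 hv, by simpa using hclique hu hy.2 hy.1.symm⟩

-- Each `y ∈ K` adjacent to `v` is matched with itself, as `s(u, y)` lies inside `K`. The other
-- edges at `v` avoid `K`, so their labels are smaller than all labels at `u`.
theorem vertexSum_lt_of_degree_le (hf : IsLabelling f G.edgeFinset)
    (hcount : MonovaryOn f (endpointCount K) G.edgeFinset) (hclique : G.IsClique K)
    (hK : K.Nontrivial) {u v : V} (hu : u ∈ K) (hv : v ∉ K) (hdeg : G.degree v ≤ G.degree u) :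
    vertexSum G f v < vertexSum G f u := by
  have hlt : ∀ {x y x' y'}, G.Adj x y → G.Adj x' y' →
      endpointCount K s(x, y) < endpointCount K s(x', y') → f s(x, y) < f s(x', y') :=
    fun hxy hxy' => lt_of_monovaryOn_of_injOn hcount hf.injOn (by simpa using hxy)
      (by simpa using hxy')
  rw [vertexSum_lt_vertexSum_iff]
  set P := (G.neighborFinset v).erase u
  set Q := (G.neighborFinset u).erase v
  have hPadj : ∀ y ∈ P, G.Adj v y := fun y hy => by simpa using mem_of_mem_erase hy
  have hQadj : ∀ y ∈ Q, G.Adj u y := fun y hy => by simpa using mem_of_mem_erase hy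
  have hKQ : K.erase u ⊆ Q := erase_subset_neighborFinset_erase hclique hu hv
  refine sum_lt_sum_of_forall_lt_of_sdiff (r := P ∩ K) inter_subset_left
    (fun y hy => hKQ (mem_erase.2 ⟨ne_of_mem_erase (mem_inter.1 hy).1, (mem_inter.1 hy).2⟩))
    ((card_neighborFinset_erase_le_iff G v u).2 hdeg) (((erase_nonempty hu).2 hK).mono hKQ)
    (fun y hy => hf.pos (by simpa using hQadj y hy)) (fun y hy => ?_) fun x hx y hy => ?_
  · rw [mem_inter] at hy
    refine hlt (hPadj y hy.1) (hclique hu hy.2 (ne_of_mem_erase hy.1).symm) ?_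
    simp [endpointCount_mk, hu, hv]
  · rw [sdiff_inter_self_left, mem_sdiff] at hx
    refine hlt (hPadj x hx.1) (hQadj y (mem_sdiff.1 hy).1) ?_
    simp [endpointCount_mk, hu, hv, hx.2]

end VertexSum

section Construction

variable {V : Type*} {K : Finset V}

theorem injOn_mk_compl {φ : V → V} (hφK : ∀ v ∉ K, φ v ∈ K) :
    Set.InjOn (fun v => s(v, φ v)) (↑K : Set V)ᶜ := by
  intro v hv v' hv' h
  rcases Sym2.eq_iff.1 h with h | h
  · exact h.1
  · exact absurd (h.1 ▸ hφK v' hv') hv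

variable [Fintype V] [DecidableEq V] {G : SimpleGraph V} [DecidableRel G.Adj]

/-- One edge `s(v, φ v)` for each vertex `v` outside `K`, where `φ v` is meant to be a neighbour of
`v` in `K`. These are the last edges outside `K` to be labelled. -/
def reservedEdges (K : Finset V) (φ : V → V) : Finset (Sym2 V) :=
  Kᶜ.image fun v => s(v, φ v)

theorem mk_mem_reservedEdges_iff {φ : V → V} (hφK : ∀ v ∉ K, φ v ∈ K) {v y : V} (hv : v ∉ K) :
    s(v, y) ∈ reservedEdges K φ ↔ y = φ v := by
  simp only [reservedEdges, mem_image, mem_compl, Sym2.eq_iff]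
  constructor
  · rintro ⟨x, hx, ⟨rfl, rfl⟩ | ⟨rfl, rfl⟩⟩
    · rfl
    · exact absurd (hφK x hx) hv
  · rintro rfl
    exact ⟨v, hv, Or.inl ⟨rfl, rfl⟩⟩

theorem reservedEdges_subset {φ : V → V} (hφadj : ∀ v ∉ K, G.Adj v (φ v)) :
    reservedEdges K φ ⊆ G.edgeFinset \ K.sym2 := by
  intro e he
  obtain ⟨v, hv, rfl⟩ := mem_image.1 he
  rw [mem_compl] at hv
  simp [hφadj v hv, hv]

theorem endpointCount_of_mem_reservedEdges {φ : V → V} (hφK : ∀ v ∉ K, φ v ∈ K) {e : Sym2 V}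
    (he : e ∈ reservedEdges K φ) : endpointCount K e = 1 := by
  obtain ⟨v, hv, rfl⟩ := mem_image.1 he
  rw [mem_compl] at hv
  simp [endpointCount_mk, hφK v hv, hv]

theorem exists_isLabelling_edges_outside_injOn_compl {φ : V → V} (hφK : ∀ v ∉ K, φ v ∈ K)
    (hφadj : ∀ v ∉ K, G.Adj v (φ v)) :
    ∃ g : Sym2 V → ℕ, IsLabelling g (G.edgeFinset \ K.sym2) ∧
      MonovaryOn g (endpointCount K) ↑(G.edgeFinset \ K.sym2) ∧
      Set.InjOn (vertexSum G g) (↑K : Set V)ᶜ := by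
  set R := reservedEdges K φ
  have hR : R ⊆ G.edgeFinset \ K.sym2 := reservedEdges_subset hφadj
  obtain ⟨h, hh, hhcount⟩ :=
    exists_isLabelling_monovaryOn ((G.edgeFinset \ K.sym2) \ R) (endpointCount K)
  let p (v : V) : ℕ := ∑ y ∈ (G.neighborFinset v).erase (φ v), h s(v, y)
  obtain ⟨g, hgh, hg, hlt, hmono⟩ := hh.exists_extension sdiff_disjoint
    (endpointSum fun x => if x ∈ K then 0 else p x)
  rw [sdiff_union_of_subset hR] at hg
  have hmemR : ∀ v ∉ K, s(v, φ v) ∈ R := fun v hv => (mk_mem_reservedEdges_iff hφK hv).2 rfl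
  refine ⟨g, hg, ?_, ?_⟩
  · rw [← sdiff_union_of_subset hR, coe_union]
    exact monovaryOn_union_of_eqOn hhcount hgh (fun e he e' he' => (hlt e he e' he').le)
      (fun e he => endpointCount_le_one_of_notMem_sym2 (mem_sdiff.1 (mem_sdiff.1 he).1).2)
      (fun e he => endpointCount_of_mem_reservedEdges hφK he)
  · have hsum : Set.EqOn (fun v => g s(v, φ v) + p v) (vertexSum G g) (↑K : Set V)ᶜ := by
      intro v hv
      have hv : v ∉ K := hv
      rw [vertexSum_eq_add_sum_erase (hφadj v hv), Nat.add_left_cancel_iff]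
      refine sum_congr rfl fun y hy => (hgh ?_).symm
      simpa [R, mk_mem_reservedEdges_iff hφK hv, hv, and_comm] using hy
    refine (injOn_add_of_monovaryOn (fun v hv v' hv' hvv' => ?_) ?_).congr hsum
    · refine hmono (hmemR v hv) (hmemR v' hv') ?_
      simpa [endpointSum_mk, hφK v hv, hφK v' hv', show v ∉ K from hv, show v' ∉ K from hv']
        using hvv'
    · exact hg.injOn.comp (injOn_mk_compl hφK) fun v hv => hR (hmemR v hv)

theorem sum_erase_lt_of_monovaryOn_endpointSum (hclique : G.IsClique K) (hcard : 3 ≤ #K)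
    {f : Sym2 V → ℕ} {ρ : V → ℕ} (hmono : MonovaryOn f (endpointSum ρ) ↑(G.edgeFinset ∩ K.sym2))
    (hinj : Set.InjOn f ↑(G.edgeFinset ∩ K.sym2)) {u u' : V} (hu : u ∈ K) (hu' : u' ∈ K)
    (hlt : ρ u < ρ u') :
    ∑ y ∈ K.erase u, f s(u, y) < ∑ y ∈ K.erase u', f s(u', y) := by
  have hedge : ∀ {x y}, x ∈ K → y ∈ K → y ≠ x → s(x, y) ∈ G.edgeFinset ∩ K.sym2 :=
    fun hx hy hne => by simp [hx, hy, hclique hx hy hne.symm]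
  refine sum_erase_lt_sum_erase hcard hu hu' (fun h => hlt.ne (congrArg ρ h)) fun y hy => ?_
  simp only [mem_erase] at hy
  refine lt_of_monovaryOn_of_injOn hmono hinj (hedge hu hy.2.2 hy.2.1) (hedge hu' hy.2.2 hy.1) ?_
  simpa only [endpointSum_mk, Nat.add_lt_add_iff_right] using hlt

theorem exists_isLabelling_edges_injOn_clique (hclique : G.IsClique K) (hcard : 3 ≤ #K)
    {g : Sym2 V → ℕ} (hg : IsLabelling g (G.edgeFinset \ K.sym2))
    (hcount : MonovaryOn g (endpointCount K) ↑(G.edgeFinset \ K.sym2)) :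
    ∃ f : Sym2 V → ℕ, Set.EqOn f g ↑(G.edgeFinset \ K.sym2) ∧ IsLabelling f G.edgeFinset ∧
      MonovaryOn f (endpointCount K) G.edgeFinset ∧ Set.InjOn (vertexSum G f) K := by
  let w (u : V) : ℕ := ∑ y ∈ G.neighborFinset u \ K, g s(u, y)
  obtain ⟨ρ, hρ, hρw⟩ := exists_isLabelling_monovaryOn K w
  obtain ⟨f, hfg, hf, hlt, hmono⟩ :=
    hg.exists_extension (disjoint_sdiff_inter G.edgeFinset K.sym2) (endpointSum ρ)
  rw [sdiff_union_inter] at hf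
  refine ⟨f, hfg, hf, ?_, ?_⟩
  · rw [← sdiff_union_inter G.edgeFinset K.sym2, coe_union]
    exact monovaryOn_union_of_eqOn hcount hfg (fun e he e' he' => (hlt e he e' he').le)
      (fun e he => (endpointCount_le_one_of_notMem_sym2 (mem_sdiff.1 he).2).trans one_le_two)
      (fun e he => endpointCount_of_mem_sym2 (mem_inter.1 he).2)
  · have hsum : Set.EqOn (fun u => ∑ y ∈ K.erase u, f s(u, y) + w u) (vertexSum G f) K := by
      intro u hu
      rw [vertexSum_eq_sum_erase_add_sum_sdiff hclique hu, Nat.add_left_cancel_iff]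
      refine sum_congr rfl fun y hy => (hfg ?_).symm
      simpa [hu] using hy
    have hinc : ∀ u ∈ K, ∀ u' ∈ K, ρ u < ρ u' →
        ∑ y ∈ K.erase u, f s(u, y) < ∑ y ∈ K.erase u', f s(u', y) := fun u hu u' hu' =>
      sum_erase_lt_of_monovaryOn_endpointSum hclique hcard hmono
        (hf.injOn.mono (coe_subset.2 inter_subset_left)) hu hu'
    refine (injOn_add_of_monovaryOn (fun u hu u' hu' huu' => ?_)
      fun u hu u' hu' heq => ?_).congr hsum
    · exact (hinc u hu u' hu' (lt_of_monovaryOn_of_injOn hρw hρ.injOn hu hu' huu')).le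
    · by_contra hne
      rcases (hρ.injOn.ne hu hu' hne).lt_or_gt with hlt | hgt
      · exact (hinc u hu u' hu' hlt).ne heq
      · exact (hinc u' hu' u hu hgt).ne' heq

end Construction

theorem antimagic_of_dominating_clique_general {V : Type*} [Fintype V] [DecidableEq V]
    (G : SimpleGraph V) [DecidableRel G.Adj] (K : Finset V)
    (hclique : G.IsClique ↑K) (hcard : 3 ≤ K.card)
    (hdom : ∀ v ∉ K, ∃ u ∈ K, G.Adj v u)
    (hdeg : ∀ v ∉ K, ∀ u ∈ K, G.degree v ≤ G.degree u) :
    IsAntimagic G := by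
  have hK : K.Nontrivial := one_lt_card_iff_nontrivial.1 (by omega)
  have : Nonempty V := hK.nonempty.to_type
  choose! φ hφK hφadj using hdom
  obtain ⟨g, hg, hgcount, hginj⟩ := exists_isLabelling_edges_outside_injOn_compl hφK hφadj
  obtain ⟨f, hfg, hf, hcount, hinj⟩ :=
    exists_isLabelling_edges_injOn_clique hclique hcard hg hgcount
  have hinj' : Set.InjOn (vertexSum G f) (↑K : Set V)ᶜ :=
    hginj.congr fun v hv => (vertexSum_congr_of_notMem hfg hv).symm
  refine ⟨f, hf, Set.injOn_univ.1 ?_⟩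
  rw [← Set.union_compl_self (↑K : Set V), Set.injOn_union disjoint_compl_right]
  exact ⟨hinj, hinj', fun u hu v hv =>
    (vertexSum_lt_of_degree_le hf hcount hclique hK hu hv (hdeg v hv u hu)).ne'⟩

/-- If a graph `G` has a dominating clique `K` of order at least `4` and every vertex
outside `K` has degree at most the minimum degree over `K`, then `G` is antimagic. -/
theorem antimagic_of_dominating_clique {V : Type*} [Fintype V] [DecidableEq V]
    (G : SimpleGraph V) [DecidableRel G.Adj] (K : Finset V)
    (hclique : G.IsClique ↑K) (hcard : 4 ≤ K.card)
    (hdom : ∀ v ∉ K, ∃ u ∈ K, G.Adj v u)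
    (hdeg : ∀ v ∉ K, ∀ u ∈ K, G.degree v ≤ G.degree u) :
    IsAntimagic G :=
  antimagic_of_dominating_clique_general G K hclique (by omega) hdom hdeg
end

section
/- Let G = (V,E) be a finite simple graph and B ⊆ V a clique such that every vertex v ∈ V \ B satisfies either N(v) ⊆ B or B ⊆ N(v), where N(v) is the set of neighbors of v. Then for every vertex v ∈ V \ B and every vertex u ∈ B, d(v) ≤ d(u); in particular d(v) ≤ min_{u ∈ B} d(u). -/
open Finset

/-! Every neighbor `w ≠ u` of `v` is adjacent to `u`: if `w ∈ B` because `B` is a clique, and if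
`w ∉ B` because `N(w)` contains `v ∉ B`, hence contains all of `B`. So `N(v) ⊆ N(u) ∪ {u}`, and
the transposition of `u` and `v` maps `N(v)` injectively into `N(u)`, whether or not `u` and `v`
are adjacent. -/

section

variable {V : Type*} {G : SimpleGraph V} {u v : V}

theorem mapsTo_swap_neighborSet_of_subset_insert [DecidableEq V]
    (h : G.neighborSet v ⊆ insert u (G.neighborSet u)) :
    Set.MapsTo (Equiv.swap u v) (G.neighborSet v) (G.neighborSet u) := by
  intro w hvw
  obtain rfl | hwu := eq_or_ne w u
  · rw [Equiv.swap_apply_left]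
    exact hvw.symm
  · rw [Equiv.swap_apply_of_ne_of_ne hwu (G.ne_of_adj hvw).symm]
    exact (h hvw).resolve_left hwu

theorem mk_neighborSet_le_of_subset_insert
    (h : G.neighborSet v ⊆ insert u (G.neighborSet u)) :
    Cardinal.mk (G.neighborSet v) ≤ Cardinal.mk (G.neighborSet u) := by
  classical
  exact Cardinal.mk_le_of_injective
    ((mapsTo_swap_neighborSet_of_subset_insert h).restrict_inj.mpr (Equiv.swap u v).injective.injOn)

theorem neighborSet_subset_insert_of_clique_split {B : Set V} (hclique : G.IsClique B)
    (h : ∀ w ∉ B, G.neighborSet w ⊆ B ∨ B ⊆ G.neighborSet w) (hv : v ∉ B) (hu : u ∈ B) :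
    G.neighborSet v ⊆ insert u (G.neighborSet u) := by
  intro w hvw
  obtain rfl | hwu := eq_or_ne w u
  · exact Set.mem_insert w _
  refine Set.mem_insert_of_mem u ?_
  by_cases hwB : w ∈ B
  · exact hclique hu hwB hwu.symm
  · have hBw : B ⊆ G.neighborSet w := (h w hwB).resolve_left fun hwsub => hv (hwsub hvw.symm)
    exact (hBw hu).symm

end

theorem degree_le_of_clique_split_general {V : Type*} (G : SimpleGraph V) (B : Set V)
    (hclique : G.IsClique B)
    (h : ∀ v ∉ B, G.neighborSet v ⊆ B ∨ B ⊆ G.neighborSet v) :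
    ∀ v ∉ B, ∀ u ∈ B, Cardinal.mk (G.neighborSet v) ≤ Cardinal.mk (G.neighborSet u) :=
  fun _ hv _ hu =>
    mk_neighborSet_le_of_subset_insert (neighborSet_subset_insert_of_clique_split hclique h hv hu)

/-- If `B` is a clique in a finite simple graph `G` such that every vertex `v ∉ B`
satisfies `N(v) ⊆ B` or `B ⊆ N(v)`, then every vertex outside `B` has degree at most the
degree of every vertex of `B`; in particular `d(v) ≤ min_{u ∈ B} d(u)`. -/
theorem degree_le_of_clique_split {V : Type*} [Fintype V] [DecidableEq V]
    (G : SimpleGraph V) [DecidableRel G.Adj] (B : Finset V)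
    (hclique : G.IsClique ↑B)
    (h : ∀ v ∉ B, G.neighborFinset v ⊆ B ∨ B ⊆ G.neighborFinset v) :
    ∀ v ∉ B, ∀ u ∈ B, G.degree v ≤ G.degree u := by
  simpa only [Finset.mem_coe, Cardinal.mk_fintype, Nat.cast_le, G.card_neighborSet_eq_degree] using
    degree_le_of_clique_split_general G B hclique (by simpa [← Finset.coe_subset] using h)
end
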